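/- (Marton's concentration theorem) Let (𝒳,d) be a Polish metric space, let α : [0,∞) → [0,∞) be an increasing bijection, and suppose μ ∈ P(𝒳) satisfies α(𝒯_d(ν,μ)) ≤ H(ν|μ) for all ν ∈ P(𝒳). Then for every Borel set A ⊆ 𝒳 with μ(A) ≥ 1/2 and every r ≥ r₀ := α⁻¹(log 2), one has μ(A^r) ≥ 1 − e^{−α(r − r₀)}. -/

import Mathlib

open MeasureTheory ENNReal

/-- The optimal transport cost `𝒯_c(ν, μ)` associated with the cost function `c`:
the infimum of `∫ c dπ` over all couplings `π` of `ν` and `μ`. -/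
noncomputable def optCost {X : Type*} [MeasurableSpace X] (c : X → X → ℝ)
    (ν μ : Measure X) : ℝ≥0∞ :=
  ⨅ (π : Measure (X × X)) (_ : π.map Prod.fst = ν ∧ π.map Prod.snd = μ),
    ∫⁻ p, ENNReal.ofReal (c p.1 p.2) ∂π

open Classical in
/-- The relative entropy `H(ν|μ)`: it equals `∫ h(dν/dμ) dμ` with
`h(t) = t log t - t + 1 ≥ 0` if `ν ≪ μ`, and `+∞` otherwise.  For probability
measures `ν ≪ μ` this coincides with `∫ log (dν/dμ) dν`. -/
noncomputable def relEntropy {X : Type*} [MeasurableSpace X] (ν μ : Measure X) : ℝ≥0∞ :=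
  if ν ≪ μ then
    ∫⁻ x, ENNReal.ofReal ((ν.rnDeriv μ x).toReal * Real.log (ν.rnDeriv μ x).toReal
      - (ν.rnDeriv μ x).toReal + 1) ∂μ
  else ∞

/-- The natural extension to `ℝ≥0∞` of a function `α : [0,∞) → [0,∞)`.
For an increasing `α` and `x < ∞` it equals `ENNReal.ofReal (α x.toReal)`,
and at `x = ∞` it is the limit of `α` at `+∞` (so `∞` when `α` is unbounded). -/
noncomputable def extRealFun (α : ℝ → ℝ) (x : ℝ≥0∞) : ℝ≥0∞ :=
  ⨆ (t : ℝ) (_ : 0 ≤ t ∧ ENNReal.ofReal t ≤ x), ENNReal.ofReal (α t)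

/-!
Conditioning `μ` on a set `S` has relative entropy `-log μ(S)`, so the transport-entropy inequality
reads `α(𝒯_d(μ[|S], μ)) ≤ -log μ(S)`: a set whose conditioned measure is far from `μ` has small
measure, and conversely a set of large measure has a conditioned measure close to `μ`. Integrating
the `1`-Lipschitz function `d(·, A)` against couplings shows that for `B` at distance at least `r`
from `A` the costs `𝒯_d(μ[|A], μ)` and `𝒯_d(μ[|B], μ)` add up to at least `r`. If `μ(A)` is large,
the first is at most `r₀`, so the second is at least `r - r₀`, and `μ(B) ≤ exp(-α(r - r₀))`.
-/

open ProbabilityTheory InformationTheory Metric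

section RelativeEntropy

variable {X : Type*} [MeasurableSpace X] {μ : Measure X} {S : Set X}

lemma rnDeriv_cond [SigmaFinite μ] (hS : MeasurableSet S) :
    μ[|S].rnDeriv μ =ᵐ[μ] S.indicator fun _ ↦ (μ S)⁻¹ := by
  have cond_eq_withDensity : μ[|S] = μ.withDensity (S.indicator fun _ ↦ (μ S)⁻¹) := by
    rw [withDensity_indicator hS, withDensity_const, ProbabilityTheory.cond]
  rw [cond_eq_withDensity]
  exact Measure.rnDeriv_withDensity μ (measurable_const.indicator hS)

lemma llr_cond [SigmaFinite μ] (hS : MeasurableSet S) :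
    llr μ[|S] μ =ᵐ[μ[|S]] fun _ ↦ -Real.log (μ.real S) := by
  filter_upwards [cond_absolutelyContinuous.ae_le (rnDeriv_cond (μ := μ) hS), ae_cond_mem hS]
    with x hx hxS
  simp only [llr_def, hx, Set.indicator_of_mem hxS, ENNReal.toReal_inv,
    Real.log_inv, measureReal_def]

lemma klDiv_cond [IsFiniteMeasure μ] (hS : MeasurableSet S) (hμS : μ S ≠ 0) :
    klDiv μ[|S] μ = ENNReal.ofReal (-Real.log (μ.real S) + μ.real Set.univ - 1) := by
  have := cond_isProbabilityMeasure hμS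
  have integrable_llr : Integrable (llr μ[|S] μ) μ[|S] :=
    (integrable_congr (llr_cond hS)).2 (integrable_const _)
  rw [klDiv_of_ac_of_integrable cond_absolutelyContinuous integrable_llr,
    integral_congr_ae (llr_cond hS), integral_const, probReal_univ, one_smul]

lemma relEntropy_eq_klDiv (ν μ : Measure X) [IsFiniteMeasure ν] [IsFiniteMeasure μ] :
    relEntropy ν μ = klDiv ν μ := by
  simp only [relEntropy, klDiv_eq_lintegral_klFun, klFun_apply, add_sub_right_comm]

end RelativeEntropy

section OptimalTransport

variable {X : Type*} [MeasurableSpace X]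

lemma optCost_comm {c : X → X → ℝ} (hc : ∀ x y, c x y = c y x) (ν μ : Measure X) :
    optCost c ν μ = optCost c μ ν := by
  suffices le_swap : ∀ ν μ : Measure X, optCost c ν μ ≤ optCost c μ ν from
    (le_swap ν μ).antisymm (le_swap μ ν)
  refine fun ν μ ↦ le_iInf₂ fun π hπ ↦ iInf₂_le_of_le (π.map Prod.swap) ⟨?_, ?_⟩ (le_of_eq ?_)
  · rw [Measure.map_map measurable_fst measurable_swap, ← hπ.2]; rfl
  · rw [Measure.map_map measurable_snd measurable_swap, ← hπ.1]; rfl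
  · exact (lintegral_map_equiv _ MeasurableEquiv.prodComm).trans
      (lintegral_congr fun p ↦ congrArg ENNReal.ofReal (hc p.2 p.1))

lemma lintegral_le_lintegral_add_optCost {c : X → X → ℝ} {f g : X → ℝ≥0∞} (hf : Measurable f)
    (hg : Measurable g) (hfg : ∀ x y, f x ≤ g y + ENNReal.ofReal (c x y)) (ν μ : Measure X) :
    ∫⁻ x, f x ∂ν ≤ ∫⁻ y, g y ∂μ + optCost c ν μ := by
  simp only [optCost, ENNReal.add_iInf]
  refine le_iInf₂ fun π hπ ↦ ?_
  calc ∫⁻ x, f x ∂ν = ∫⁻ p, f p.1 ∂π := by rw [← hπ.1, lintegral_map hf measurable_fst]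
    _ ≤ ∫⁻ p, (g p.2 + ENNReal.ofReal (c p.1 p.2)) ∂π := lintegral_mono fun p ↦ hfg p.1 p.2
    _ = ∫⁻ p, g p.2 ∂π + ∫⁻ p, ENNReal.ofReal (c p.1 p.2) ∂π :=
      lintegral_add_left (hg.comp measurable_snd) _
    _ = ∫⁻ y, g y ∂μ + ∫⁻ p, ENNReal.ofReal (c p.1 p.2) ∂π := by
      rw [← hπ.2, lintegral_map hg measurable_snd]

lemma le_optCost_add_optCost [PseudoMetricSpace X] [OpensMeasurableSpace X] {ν₁ ν₂ : Measure X}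
    [IsProbabilityMeasure ν₂] {A : Set X} {r : ℝ≥0∞} (h₁ : ∀ᵐ x ∂ν₁, infEDist x A = 0)
    (h₂ : ∀ᵐ x ∂ν₂, r ≤ infEDist x A) (μ : Measure X) :
    r ≤ optCost dist ν₁ μ + optCost dist ν₂ μ := by
  have lintegral_infEDist_le (ν ν' : Measure X) :
      ∫⁻ x, infEDist x A ∂ν ≤ ∫⁻ x, infEDist x A ∂ν' + optCost dist ν ν' :=
    lintegral_le_lintegral_add_optCost measurable_infEDist measurable_infEDist
      (fun x y ↦ edist_dist x y ▸ infEDist_le_infEDist_add_edist) ν ν'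
  calc r = ∫⁻ _, r ∂ν₂ := by rw [lintegral_const, measure_univ, mul_one]
    _ ≤ ∫⁻ x, infEDist x A ∂ν₂ := lintegral_mono_ae h₂
    _ ≤ ∫⁻ x, infEDist x A ∂μ + optCost dist ν₂ μ := lintegral_infEDist_le ν₂ μ
    _ ≤ ∫⁻ x, infEDist x A ∂ν₁ + optCost dist μ ν₁ + optCost dist ν₂ μ := by
      gcongr; exact lintegral_infEDist_le μ ν₁
    _ = optCost dist ν₁ μ + optCost dist ν₂ μ := by
      rw [lintegral_congr_ae h₁, lintegral_zero, zero_add, optCost_comm dist_comm]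

end OptimalTransport

/-- The transport-entropy inequality `α(𝒯_c(ν, μ)) ≤ H(ν|μ)` for all probability measures `ν`, with
`α` extended to infinite costs by `extRealFun`. -/
def TransportEntropyInequality {X : Type*} [MeasurableSpace X] (c : X → X → ℝ) (α : ℝ → ℝ)
    (μ : Measure X) : Prop :=
  ∀ ν : Measure X, IsProbabilityMeasure ν → extRealFun α (optCost c ν μ) ≤ relEntropy ν μ

namespace TransportEntropyInequality

variable {X : Type*} [MeasurableSpace X] {c : X → X → ℝ} {α : ℝ → ℝ} {μ : Measure X}
  [IsProbabilityMeasure μ]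

lemma measure_le_of_le_optCost_cond (hT : TransportEntropyInequality c α μ) {S : Set X}
    (hS : MeasurableSet S) {t : ℝ} (ht : 0 ≤ t) (htS : ENNReal.ofReal t ≤ optCost c μ[|S] μ) :
    μ S ≤ ENNReal.ofReal (Real.exp (-α t)) := by
  rcases eq_or_ne (μ S) 0 with hμS | hμS
  · simp only [hμS, zero_le]
  have hν := cond_isProbabilityMeasure hμS
  have entropy_bound : ENNReal.ofReal (α t) ≤ ENNReal.ofReal (-Real.log (μ.real S)) :=
    calc ENNReal.ofReal (α t) ≤ extRealFun α (optCost c μ[|S] μ) :=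
          le_iSup₂_of_le t ⟨ht, htS⟩ le_rfl
      _ ≤ relEntropy μ[|S] μ := hT _ hν
      _ = ENNReal.ofReal (-Real.log (μ.real S)) := by
          rw [relEntropy_eq_klDiv, klDiv_cond hS hμS, probReal_univ, add_sub_cancel_right]
  have log_nonpos : Real.log (μ.real S) ≤ 0 :=
    Real.log_nonpos measureReal_nonneg measureReal_le_one
  have log_le : Real.log (μ.real S) ≤ -α t :=
    le_neg_of_le_neg ((ENNReal.ofReal_le_ofReal_iff (neg_nonneg.2 log_nonpos)).1 entropy_bound)
  rw [← ofReal_measureReal]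
  exact ENNReal.ofReal_le_ofReal ((Real.log_le_iff_le_exp
    (ENNReal.toReal_pos hμS (measure_ne_top μ S))).1 log_le)

lemma optCost_cond_le (hT : TransportEntropyInequality c α μ) {S : Set X} (hS : MeasurableSet S)
    {s : ℝ} (hs : 0 ≤ s) (hμS : ∀ t > s, ENNReal.ofReal (Real.exp (-α t)) < μ S) :
    optCost c μ[|S] μ ≤ ENNReal.ofReal s := by
  by_contra! hlt
  obtain ⟨t, ht, hst, ht_le⟩ := ENNReal.lt_iff_exists_real_btwn.1 hlt
  exact (hμS t ((ENNReal.ofReal_lt_ofReal_iff_of_nonneg hs).1 hst)).not_ge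
    (hT.measure_le_of_le_optCost_cond hS ht ht_le.le)

lemma measure_le_of_le_infDist [PseudoMetricSpace X] [OpensMeasurableSpace X]
    (hT : TransportEntropyInequality dist α μ) {A B : Set X} (hB : MeasurableSet B) {r₀ r : ℝ}
    (hr₀ : 0 ≤ r₀) (hr : r₀ ≤ r) (hA : ∀ t > r₀, ENNReal.ofReal (Real.exp (-α t)) < μ A)
    (hAB : ∀ x ∈ B, r ≤ infDist x A) :
    μ B ≤ ENNReal.ofReal (Real.exp (-α (r - r₀))) := by
  rcases eq_or_ne (μ B) 0 with hμB | hμB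
  · simp only [hμB, zero_le]
  have := cond_isProbabilityMeasure hμB
  -- Passing to the closure makes `A` measurable without changing `infDist · A`.
  have hA_closure : MeasurableSet (closure A) := isClosed_closure.measurableSet
  have optCost_A_le : optCost dist μ[|closure A] μ ≤ ENNReal.ofReal r₀ :=
    hT.optCost_cond_le hA_closure hr₀ fun t ht ↦
      (hA t ht).trans_le (measure_mono subset_closure)
  have le_add : ENNReal.ofReal r ≤ optCost dist μ[|closure A] μ + optCost dist μ[|B] μ :=
    le_optCost_add_optCost
      ((ae_cond_mem hA_closure).mono fun _ ↦ mem_closure_iff_infEDist_zero.1)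
      ((ae_cond_mem hB).mono fun x hx ↦ ENNReal.ofReal_le_of_le_toReal (hAB x hx)) μ
  refine hT.measure_le_of_le_optCost_cond hB (sub_nonneg.2 hr) ?_
  rw [ENNReal.ofReal_sub _ hr₀, tsub_le_iff_left]
  exact le_add.trans (by gcongr)

end TransportEntropyInequality

lemma ofReal_exp_neg_lt_half {s : ℝ} (hs : Real.log 2 < s) :
    ENNReal.ofReal (Real.exp (-s)) < 1 / 2 := by
  have exp_lt : Real.exp (-s) < 2⁻¹ := by
    rw [← Real.exp_log (two_pos : (0 : ℝ) < 2), ← Real.exp_neg]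
    exact Real.exp_lt_exp.2 (neg_lt_neg hs)
  rw [one_div, ← ENNReal.ofReal_ofNat 2, ← ENNReal.ofReal_inv_of_pos two_pos]
  exact (ENNReal.ofReal_lt_ofReal_iff (by positivity)).2 exp_lt

theorem marton_concentration_general {X : Type*} [PseudoMetricSpace X] [MeasurableSpace X]
    [OpensMeasurableSpace X] {α : ℝ → ℝ} {μ : Measure X} [IsProbabilityMeasure μ]
    (hT : TransportEntropyInequality dist α μ) {r₀ : ℝ} (hr₀ : 0 ≤ r₀) {A : Set X}
    (hA : ∀ t > r₀, ENNReal.ofReal (Real.exp (-α t)) < μ A) {r : ℝ} (hr : r₀ ≤ r) :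
    1 - ENNReal.ofReal (Real.exp (-α (r - r₀))) ≤ μ {x | infDist x A ≤ r} := by
  have hC : MeasurableSet {x | infDist x A ≤ r} :=
    measurableSet_le measurable_infDist measurable_const
  have measure_compl_le : μ {x | infDist x A ≤ r}ᶜ ≤ ENNReal.ofReal (Real.exp (-α (r - r₀))) :=
    hT.measure_le_of_le_infDist hC.compl hr₀ hr hA fun x (hx : ¬infDist x A ≤ r) ↦
      (not_le.1 hx).le
  calc 1 - ENNReal.ofReal (Real.exp (-α (r - r₀))) ≤ 1 - μ {x | infDist x A ≤ r}ᶜ :=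
        tsub_le_tsub_left measure_compl_le 1
    _ = μ {x | infDist x A ≤ r} := by rw [← prob_compl_eq_one_sub hC.compl, compl_compl]

/-- Marton's concentration theorem: if `μ` satisfies the transport-entropy inequality
`α(𝒯_d(ν,μ)) ≤ H(ν|μ)` for all `ν`, where `α : [0,∞) → [0,∞)` is an increasing
bijection, then for any Borel set `A` with `μ(A) ≥ 1/2` and any `r ≥ r₀ = α⁻¹(log 2)`,
one has `μ(Aʳ) ≥ 1 − exp(−α(r − r₀))`, where `Aʳ = {x | d(x, A) ≤ r}`. -/
theorem marton_concentration {X : Type*} [MetricSpace X] [CompleteSpace X]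
    [TopologicalSpace.SeparableSpace X] [MeasurableSpace X] [BorelSpace X]
    (α : ℝ → ℝ) (hα_mono : StrictMonoOn α (Set.Ici 0))
    (hα_bij : Set.BijOn α (Set.Ici 0) (Set.Ici 0))
    (μ : Measure X) [IsProbabilityMeasure μ]
    (hT : ∀ ν : Measure X, IsProbabilityMeasure ν →
      extRealFun α (optCost (fun x y => dist x y) ν μ) ≤ relEntropy ν μ)
    (r₀ : ℝ) (hr₀_nonneg : 0 ≤ r₀) (hr₀ : α r₀ = Real.log 2)
    (A : Set X) (hA : MeasurableSet A) (hAμ : (1 / 2 : ℝ≥0∞) ≤ μ A)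
    (r : ℝ) (hr : r₀ ≤ r) :
    1 - ENNReal.ofReal (Real.exp (-α (r - r₀))) ≤ μ {x | Metric.infDist x A ≤ r} := by
  exact marton_concentration_general hT hr₀_nonneg (fun t ht ↦ (ofReal_exp_neg_lt_half
    (hr₀ ▸ hα_mono hr₀_nonneg (hr₀_nonneg.trans ht.le) ht)).trans_le hAμ) hr
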